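/- Let ξ = e^{2πi/3}, A = diag(ξ, ξ²), B₁ = [[0, −1],[−1, 0]], B₂ = [[0, 1],[1, 0]] in GL(2, ℂ), and let G₁ = ⟨A, B₁⟩ and G₂ = ⟨A, B₂⟩ be the subgroups they generate. Then: G₁ and G₂ are each isomorphic to the symmetric group on 3 letters (the dihedral group of order 6); G₁ ≠ G₂; neither G₁ nor G₂ contains −Id (so the projection π : GL(2, ℂ) → PGL(2, ℂ) is injective on each); π(G₁) = π(G₂); and for β = (x₀³ − 2x₁³)(x₁³ − 2x₀³) one has β∘g = β for every g ∈ G₁ ∪ G₂. (Lemma: if K = D_n is splitting then K = D₃ with β = (x₀³ − 2x₁³)(x₁³ − 2x₀³), and there are exactly two liftings ε₁, ε₂ : D₃ → D₆ ⊂ GL(2, ℂ).) -/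

import Mathlib

/-- `PGL(2, ℂ)`: the quotient of `GL(2, ℂ)` by its center (the nonzero scalar matrices). -/
abbrev PGL2C := GL (Fin 2) ℂ ⧸ Subgroup.center (GL (Fin 2) ℂ)

/-- The canonical projection `π : GL(2, ℂ) → PGL(2, ℂ)`. -/
def projGL2 : GL (Fin 2) ℂ →* PGL2C := QuotientGroup.mk' (Subgroup.center (GL (Fin 2) ℂ))

/-- `β ∘ g`: the polynomial obtained from `β` by substituting
`(g₀₀x₀ + g₀₁x₁, g₁₀x₀ + g₁₁x₁)` for `(x₀, x₁)`. -/
noncomputable def polyComp (g : GL (Fin 2) ℂ) (β : MvPolynomial (Fin 2) ℂ) :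
    MvPolynomial (Fin 2) ℂ :=
  MvPolynomial.aeval
    (fun i => ∑ j, MvPolynomial.C ((g : Matrix (Fin 2) (Fin 2) ℂ) i j) * MvPolynomial.X j) β

/-- The sextic `β = (x₀³ − 2x₁³)(x₁³ − 2x₀³)`. -/
noncomputable def bolzaSextic : MvPolynomial (Fin 2) ℂ :=
  (MvPolynomial.X 0 ^ 3 - 2 * MvPolynomial.X 1 ^ 3) *
    (MvPolynomial.X 1 ^ 3 - 2 * MvPolynomial.X 0 ^ 3)

section helpers

def kk (σ : Equiv.Perm (Fin 3)) : ℕ := (σ 0).val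
def ee (σ : Equiv.Perm (Fin 3)) : ℕ := if σ 1 = σ 0 + 1 then 0 else 1

lemma kk_ee_mul : ∀ σ τ : Equiv.Perm (Fin 3),
    kk (σ * τ) = (kk σ + (if ee σ = 0 then kk τ else 2 * kk τ)) % 3 ∧
    ee (σ * τ) = (ee σ + ee τ) % 2 := by decide

lemma kk_ee_inj : ∀ σ : Equiv.Perm (Fin 3), kk σ = 0 → ee σ = 0 → σ = 1 := by decide

lemma kk_lt (σ : Equiv.Perm (Fin 3)) : kk σ < 3 := (σ 0).isLt

lemma ee_lt (σ : Equiv.Perm (Fin 3)) : ee σ < 2 := by unfold ee; split_ifs <;> norm_num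

lemma exists_c : ∃ σ : Equiv.Perm (Fin 3), kk σ = 1 ∧ ee σ = 0 := by decide
lemma exists_t : ∃ σ : Equiv.Perm (Fin 3), kk σ = 0 ∧ ee σ = 1 := by decide

variable {G : Type*} [Group G]

lemma pow_mod_three {A : G} (hA : A ^ 3 = 1) (n : ℕ) : A ^ (n % 3) = A ^ n := by
  conv_rhs => rw [← Nat.div_add_mod n 3, pow_add, pow_mul, hA, one_pow, one_mul]

lemma pow_mod_two {B : G} (hB : B ^ 2 = 1) (n : ℕ) : B ^ (n % 2) = B ^ n := by
  conv_rhs => rw [← Nat.div_add_mod n 2, pow_add, pow_mul, hB, one_pow, one_mul]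

lemma B_mul_pow {A B : G} (h : B * A = A ^ 2 * B) (b : ℕ) : B * A ^ b = A ^ (2 * b) * B := by
  induction b with
  | zero => simp
  | succ n ih => rw [pow_succ, ← mul_assoc, ih, mul_assoc, h, ← mul_assoc, ← pow_add]; rfl

def permHom {A B : G} (hA : A ^ 3 = 1) (hB : B ^ 2 = 1) (h : B * A = A ^ 2 * B) :
    Equiv.Perm (Fin 3) →* G :=
  MonoidHom.mk' (fun σ => A ^ kk σ * B ^ ee σ) (by
    intro σ τ
    obtain ⟨h1, h2⟩ := kk_ee_mul σ τ
    have h3 := ee_lt σ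
    rw [h1, h2, pow_mod_three hA, pow_mod_two hB]
    generalize ee σ = e at *
    interval_cases e
    · simp [pow_add, mul_assoc]
    · simp only [one_ne_zero, if_false, pow_add, pow_one]
      rw [mul_assoc, mul_assoc, ← mul_assoc B (A ^ _), B_mul_pow h, mul_assoc])

lemma permHom_apply {A B : G} (hA : A ^ 3 = 1) (hB : B ^ 2 = 1) (h : B * A = A ^ 2 * B)
    (σ : Equiv.Perm (Fin 3)) : permHom hA hB h σ = A ^ kk σ * B ^ ee σ := rfl

lemma permHom_range {A B : G} (hA : A ^ 3 = 1) (hB : B ^ 2 = 1) (h : B * A = A ^ 2 * B) :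
    (permHom hA hB h).range = Subgroup.closure {A, B} := by
  apply le_antisymm
  · rintro _ ⟨σ, rfl⟩
    rw [permHom_apply]
    exact mul_mem (pow_mem (Subgroup.subset_closure (by simp)) _)
      (pow_mem (Subgroup.subset_closure (by simp)) _)
  · rw [Subgroup.closure_le]
    rintro x (rfl | rfl)
    · obtain ⟨σ, h1, h2⟩ := exists_c
      exact ⟨σ, by rw [permHom_apply, h1, h2]; simp⟩
    · obtain ⟨σ, h1, h2⟩ := exists_t
      exact ⟨σ, by rw [permHom_apply, h1, h2]; simp⟩

lemma central_aux {A B : G} (hA : A ^ 3 = 1) (h : B * A = A ^ 2 * B)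
    (hne : A ≠ 1) {a e : ℕ} (ha : a < 3) (he : e < 2)
    (c1 : A * (A ^ a * B ^ e) = (A ^ a * B ^ e) * A)
    (c2 : B * (A ^ a * B ^ e) = (A ^ a * B ^ e) * B) : a = 0 ∧ e = 0 := by
  interval_cases e
  · refine ⟨?_, rfl⟩
    simp only [pow_zero, mul_one] at c2
    rw [B_mul_pow h] at c2
    have h1 := mul_right_cancel c2
    have h2 : A ^ a = 1 := by rwa [two_mul, pow_add, mul_eq_left] at h1
    interval_cases a
    · rfl
    · simp at h2; exact absurd h2 hne
    · rw [pow_succ, h2, one_mul] at hA; exact absurd hA hne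
  · exfalso
    rw [pow_one, mul_assoc, h, ← mul_assoc, ← mul_assoc, ← pow_succ', ← pow_add] at c1
    have h1 := mul_right_cancel c1
    rw [pow_add, pow_add] at h1
    have h2 := mul_left_cancel h1
    rw [pow_two, pow_one, left_eq_mul] at h2
    exact hne h2

lemma central_closure {A B : G} (hA : A ^ 3 = 1) (hB : B ^ 2 = 1) (h : B * A = A ^ 2 * B)
    (hne : A ≠ 1) {g : G} (hg : g ∈ Subgroup.closure {A, B}) (hc : g ∈ Subgroup.center G) :
    g = 1 := by
  rw [← permHom_range hA hB h] at hg
  obtain ⟨σ, rfl⟩ := hg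
  rw [permHom_apply] at *
  rw [Subgroup.mem_center_iff] at hc
  obtain ⟨h1, h2⟩ := central_aux hA h hne (kk_lt σ) (ee_lt σ) (hc A) (hc B)
  simp [h1, h2]

lemma closure_equiv {A B : G} (hA : A ^ 3 = 1) (hB : B ^ 2 = 1) (h : B * A = A ^ 2 * B)
    (hne : A ≠ 1) : Nonempty ((Subgroup.closure {A, B} : Subgroup G) ≃* Equiv.Perm (Fin 3)) := by
  have hinj : Function.Injective (permHom hA hB h) := by
    rw [injective_iff_map_eq_one]
    intro σ hσ
    rw [permHom_apply] at hσ
    obtain ⟨h1, h2⟩ := central_aux hA h hne (kk_lt σ) (ee_lt σ) (by simp [hσ]) (by simp [hσ])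
    exact kk_ee_inj σ h1 h2
  rw [← permHom_range hA hB h]
  exact ⟨(MonoidHom.ofInjective hinj).symm⟩

noncomputable def polyHom (g : GL (Fin 2) ℂ) :
    MvPolynomial (Fin 2) ℂ →ₐ[ℂ] MvPolynomial (Fin 2) ℂ :=
  MvPolynomial.aeval
    (fun i => ∑ j, MvPolynomial.C ((g : Matrix (Fin 2) (Fin 2) ℂ) i j) * MvPolynomial.X j)

lemma polyHom_X (g : GL (Fin 2) ℂ) (i : Fin 2) : polyHom g (MvPolynomial.X i) =
    MvPolynomial.C ((g : Matrix (Fin 2) (Fin 2) ℂ) i 0) * MvPolynomial.X 0 +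
    MvPolynomial.C ((g : Matrix (Fin 2) (Fin 2) ℂ) i 1) * MvPolynomial.X 1 := by
  unfold polyHom
  rw [MvPolynomial.aeval_X, Fin.sum_univ_two]

lemma polyHom_C (g : GL (Fin 2) ℂ) (a : ℂ) :
    polyHom g (MvPolynomial.C a) = MvPolynomial.C a := (polyHom g).commutes a

lemma polyHom_mul (g h : GL (Fin 2) ℂ) : polyHom (g * h) = (polyHom h).comp (polyHom g) := by
  apply MvPolynomial.algHom_ext
  intro i
  rw [AlgHom.comp_apply, polyHom_X, polyHom_X, map_add, map_mul, map_mul, polyHom_X, polyHom_X,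
    polyHom_C, polyHom_C, Units.val_mul, Matrix.mul_apply, Matrix.mul_apply, Fin.sum_univ_two,
    Fin.sum_univ_two]
  simp only [map_add, map_mul]
  ring

lemma polyComp_mul (g h : GL (Fin 2) ℂ) (β : MvPolynomial (Fin 2) ℂ) :
    polyComp (g * h) β = polyComp h (polyComp g β) :=
  DFunLike.congr_fun (polyHom_mul g h) β

lemma polyComp_one (β : MvPolynomial (Fin 2) ℂ) : polyComp 1 β = β := by
  have h : (fun i => ∑ j, MvPolynomial.C (((1 : GL (Fin 2) ℂ) : Matrix (Fin 2) (Fin 2) ℂ) i j) *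
      MvPolynomial.X j) = (MvPolynomial.X : Fin 2 → MvPolynomial (Fin 2) ℂ) := by
    funext i
    fin_cases i <;> simp [Fin.sum_univ_two]
  unfold polyComp
  rw [h, MvPolynomial.aeval_X_left, AlgHom.id_apply]

lemma polyComp_bolza {g : GL (Fin 2) ℂ} {a b c d : ℂ}
    (hg : (g : Matrix (Fin 2) (Fin 2) ℂ) = !![a, b; c, d]) :
    polyComp g bolzaSextic =
      ((MvPolynomial.C a * MvPolynomial.X 0 + MvPolynomial.C b * MvPolynomial.X 1) ^ 3 -
        2 * (MvPolynomial.C c * MvPolynomial.X 0 + MvPolynomial.C d * MvPolynomial.X 1) ^ 3) *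
      ((MvPolynomial.C c * MvPolynomial.X 0 + MvPolynomial.C d * MvPolynomial.X 1) ^ 3 -
        2 * (MvPolynomial.C a * MvPolynomial.X 0 + MvPolynomial.C b * MvPolynomial.X 1) ^ 3) := by
  unfold polyComp bolzaSextic
  rw [hg]
  simp only [map_mul, map_sub, map_pow, map_ofNat, MvPolynomial.aeval_X, Fin.sum_univ_two]
  rfl

lemma polyComp_closure {A B : GL (Fin 2) ℂ} {β : MvPolynomial (Fin 2) ℂ}
    (hA : polyComp A β = β) (hB : polyComp B β = β) {g : GL (Fin 2) ℂ}
    (hg : g ∈ Subgroup.closure {A, B}) : polyComp g β = β := by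
  induction hg using Subgroup.closure_induction with
  | mem x hx => rcases hx with rfl | rfl <;> assumption
  | one => exact polyComp_one β
  | mul x y _ _ hx hy => rw [polyComp_mul, hx, hy]
  | inv x _ hx =>
    conv_lhs => rw [← hx]
    rw [← polyComp_mul, mul_inv_cancel, polyComp_one]

end helpers

/-- Let `ξ = e^{2πi/3}`, `A = diag(ξ, ξ²)`, `B₁ = [[0,−1],[−1,0]]`, `B₂ = [[0,1],[1,0]]`
and `G₁ = ⟨A, B₁⟩`, `G₂ = ⟨A, B₂⟩`.  Then `G₁` and `G₂` are each isomorphic to `S₃`,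
`G₁ ≠ G₂`, neither contains `−Id` (so `π` is injective on each), `π(G₁) = π(G₂)`, and
`β ∘ g = β` for `β = (x₀³ − 2x₁³)(x₁³ − 2x₀³)` and every `g ∈ G₁ ∪ G₂`. -/
theorem two_liftings_D3 (A B₁ B₂ : GL (Fin 2) ℂ)
    (hA : (A : Matrix (Fin 2) (Fin 2) ℂ) = Matrix.diagonal
      ![Complex.exp (2 * Real.pi * Complex.I / 3), Complex.exp (2 * Real.pi * Complex.I / 3) ^ 2])
    (hB₁ : (B₁ : Matrix (Fin 2) (Fin 2) ℂ) = !![0, -1; -1, 0])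
    (hB₂ : (B₂ : Matrix (Fin 2) (Fin 2) ℂ) = !![0, 1; 1, 0]) :
    Nonempty ((Subgroup.closure {A, B₁} : Subgroup (GL (Fin 2) ℂ)) ≃* Equiv.Perm (Fin 3)) ∧
    Nonempty ((Subgroup.closure {A, B₂} : Subgroup (GL (Fin 2) ℂ)) ≃* Equiv.Perm (Fin 3)) ∧
    Subgroup.closure {A, B₁} ≠ Subgroup.closure {A, B₂} ∧
    (-1 : GL (Fin 2) ℂ) ∉ Subgroup.closure {A, B₁} ∧
    (-1 : GL (Fin 2) ℂ) ∉ Subgroup.closure {A, B₂} ∧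
    (∀ g ∈ Subgroup.closure {A, B₁}, projGL2 g = 1 → g = 1) ∧
    (∀ g ∈ Subgroup.closure {A, B₂}, projGL2 g = 1 → g = 1) ∧
    Subgroup.map projGL2 (Subgroup.closure {A, B₁}) =
      Subgroup.map projGL2 (Subgroup.closure {A, B₂}) ∧
    (∀ g : GL (Fin 2) ℂ, g ∈ Subgroup.closure {A, B₁} ∨ g ∈ Subgroup.closure {A, B₂} →
      polyComp g bolzaSextic = bolzaSextic) := by
  generalize hw : Complex.exp (2 * Real.pi * Complex.I / 3) = w at hA
  have hp : IsPrimitiveRoot w 3 := by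
    rw [← hw]; exact_mod_cast Complex.isPrimitiveRoot_exp 3 (by norm_num)
  have hw3 : w ^ 3 = 1 := hp.pow_eq_one
  have hw1 : w ≠ 1 := hp.ne_one (by norm_num)
  have hA' : (A : Matrix (Fin 2) (Fin 2) ℂ) = !![w, 0; 0, w ^ 2] := by
    rw [hA]; ext i j; fin_cases i <;> fin_cases j <;> simp
  have hA3 : A ^ 3 = 1 := by
    apply Units.ext
    rw [Units.val_pow_eq_pow_val, hA', pow_succ, pow_two]
    ext i j
    fin_cases i <;> fin_cases j <;> simp <;> first | linear_combination hw3 | linear_combination (w ^ 3 + 1) * hw3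
  have hAne : A ≠ 1 := by
    intro h
    have := congrArg (fun M : GL (Fin 2) ℂ => (M : Matrix (Fin 2) (Fin 2) ℂ) 0 0) h
    simp [hA'] at this
    exact hw1 this
  have hB12 : B₁ ^ 2 = 1 := by
    apply Units.ext
    rw [Units.val_pow_eq_pow_val, hB₁, pow_two]
    ext i j
    fin_cases i <;> fin_cases j <;> simp
  have hB22 : B₂ ^ 2 = 1 := by
    apply Units.ext
    rw [Units.val_pow_eq_pow_val, hB₂, pow_two]
    ext i j
    fin_cases i <;> fin_cases j <;> simp
  have hw4 : w ^ 2 * w ^ 2 = w := by linear_combination w * hw3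
  have h1 : B₁ * A = A ^ 2 * B₁ := by
    apply Units.ext
    rw [Units.val_mul, Units.val_mul, Units.val_pow_eq_pow_val, pow_two, hB₁, hA']
    ext i j
    fin_cases i <;> fin_cases j <;> simp <;> first | ring1 | linear_combination w * hw3 | linear_combination -w * hw3
  have h2 : B₂ * A = A ^ 2 * B₂ := by
    apply Units.ext
    rw [Units.val_mul, Units.val_mul, Units.val_pow_eq_pow_val, pow_two, hB₂, hA']
    ext i j
    fin_cases i <;> fin_cases j <;> simp <;> first | ring1 | linear_combination w * hw3 | linear_combination -w * hw3
  have hB : B₁ = -1 * B₂ := by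
    apply Units.ext
    rw [Units.val_mul, hB₁, hB₂]
    ext i j
    fin_cases i <;> fin_cases j <;> simp
  have hcen : (-1 : GL (Fin 2) ℂ) ∈ Subgroup.center (GL (Fin 2) ℂ) := by
    rw [Subgroup.mem_center_iff]; intro g; simp
  have hneg : (-1 : GL (Fin 2) ℂ) ≠ 1 := by
    intro h
    have := congrArg (fun M : GL (Fin 2) ℂ => (M : Matrix (Fin 2) (Fin 2) ℂ) 0 0) h
    norm_num at this
  have n1 : (-1 : GL (Fin 2) ℂ) ∉ Subgroup.closure {A, B₁} := fun h =>
    hneg (central_closure hA3 hB12 h1 hAne h hcen)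
  have n2 : (-1 : GL (Fin 2) ℂ) ∉ Subgroup.closure {A, B₂} := fun h =>
    hneg (central_closure hA3 hB22 h2 hAne h hcen)
  have ker : ∀ g, projGL2 g = 1 → g ∈ Subgroup.center (GL (Fin 2) ℂ) := fun g hg =>
    (QuotientGroup.eq_one_iff g).1 hg
  have hC : (MvPolynomial.C w : MvPolynomial (Fin 2) ℂ) ^ 3 = 1 := by
    rw [← map_pow, hw3, map_one]
  have pA : polyComp A bolzaSextic = bolzaSextic := by
    have e1 : (MvPolynomial.C w * MvPolynomial.X 0 : MvPolynomial (Fin 2) ℂ) ^ 3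
        = MvPolynomial.X 0 ^ 3 := by rw [mul_pow, hC, one_mul]
    have e2 : (MvPolynomial.C w ^ 2 * MvPolynomial.X 1 : MvPolynomial (Fin 2) ℂ) ^ 3
        = MvPolynomial.X 1 ^ 3 := by rw [mul_pow, ← pow_mul, mul_comm 2 3, pow_mul, hC]; simp
    rw [polyComp_bolza hA']
    simp [bolzaSextic, e1, e2]
  have pB1 : polyComp B₁ bolzaSextic = bolzaSextic := by
    rw [polyComp_bolza hB₁]
    simp only [bolzaSextic, map_zero, map_one, map_neg]
    ring
  have pB2 : polyComp B₂ bolzaSextic = bolzaSextic := by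
    rw [polyComp_bolza hB₂]
    simp only [bolzaSextic, map_zero, map_one, map_neg]
    ring
  refine ⟨closure_equiv hA3 hB12 h1 hAne, closure_equiv hA3 hB22 h2 hAne, ?_, n1, n2,
    fun g hg hpg => central_closure hA3 hB12 h1 hAne hg (ker g hpg),
    fun g hg hpg => central_closure hA3 hB22 h2 hAne hg (ker g hpg), ?_, ?_⟩
  · intro heq
    apply n2
    have m1 : B₁ ∈ Subgroup.closure {A, B₂} := heq ▸ Subgroup.subset_closure (by simp)
    have m2 : B₂ ∈ Subgroup.closure {A, B₂} := Subgroup.subset_closure (by simp)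
    have m3 := mul_mem m1 m2
    rwa [hB, mul_assoc, ← pow_two, hB22, mul_one] at m3
  · have hn : projGL2 (-1) = 1 := (QuotientGroup.eq_one_iff _).2 hcen
    have : projGL2 B₁ = projGL2 B₂ := by rw [hB, map_mul, hn, one_mul]
    rw [MonoidHom.map_closure, MonoidHom.map_closure, Set.image_pair, Set.image_pair, this]
  · rintro g (hg | hg)
    · exact polyComp_closure pA pB1 hg
    · exact polyComp_closure pA pB2 hg
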